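/- There exists an absolute constant C > 0 with the following property. Let ν ≥ 1 be a real number and let π_ν(i) = e^{−ν}·ν^i/i! denote the Poisson probability mass function with parameter ν on the natural numbers. Then for every subset E ⊆ ℕ, ∑_{i ∈ E} i·π_ν(i) ≤ max{1/ν, C·ν³·∑_{i ∈ E} π_ν(i)}. (Equivalently, for a Poisson(ν) random variable X and any event ℰ, E[X | ℰ]·Pr[ℰ] ≤ max{1/ν, C·ν³·Pr[ℰ]}.) -/

import Mathlib

/-- The Poisson probability mass function with parameter `ν`. -/
noncomputable def poissonPMF (ν : ℝ) (i : ℕ) : ℝ :=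
  Real.exp (-ν) * ν ^ i / (Nat.factorial i)

theorem poissonPMF_nonneg {ν : ℝ} (hν : 0 ≤ ν) (i : ℕ) : 0 ≤ poissonPMF ν i := by
  unfold poissonPMF
  positivity

theorem hasSum_poissonPMF (ν : ℝ) : HasSum (poissonPMF ν) 1 := by
  have h := (NormedSpace.expSeries_div_hasSum_exp ν).mul_left (Real.exp (-ν))
  rw [← Real.exp_eq_exp_ℝ, ← Real.exp_add, neg_add_cancel, Real.exp_zero] at h
  exact h.congr_fun fun i => by simp only [poissonPMF, mul_div_assoc]

theorem succ_mul_poissonPMF_succ (ν : ℝ) (i : ℕ) :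
    ((i + 1 : ℕ) : ℝ) * poissonPMF ν (i + 1) = ν * poissonPMF ν i := by
  unfold poissonPMF
  rw [Nat.factorial_succ]
  push_cast
  field_simp
  ring

theorem hasSum_id_mul_poissonPMF (ν : ℝ) :
    HasSum (fun i : ℕ => (i : ℝ) * poissonPMF ν i) ν := by
  rw [← hasSum_nat_add_iff' 1]
  simpa [succ_mul_poissonPMF_succ, -Nat.cast_add] using (hasSum_poissonPMF ν).mul_left ν

theorem hasSum_sq_mul_poissonPMF (ν : ℝ) :
    HasSum (fun i : ℕ => (i : ℝ) ^ 2 * poissonPMF ν i) (ν * (ν + 1)) := by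
  rw [← hasSum_nat_add_iff' 1]
  have h := ((hasSum_id_mul_poissonPMF ν).add (hasSum_poissonPMF ν)).mul_left ν
  have hs (i : ℕ) : ((i + 1 : ℕ) : ℝ) ^ 2 * poissonPMF ν (i + 1)
      = ν * ((i : ℝ) * poissonPMF ν i + poissonPMF ν i) := by
    rw [sq, mul_assoc, succ_mul_poissonPMF_succ]
    push_cast
    ring
  simpa [hs, -Nat.cast_add] using h

/-- there is an absolute constant `C > 0` such that for every `ν ≥ 1`
and every event `E ⊆ ℕ`, a Poisson(ν) variable `X` satisfies
`E[X·1_E] ≤ max{1/ν, C·ν³·Pr[E]}`. -/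
theorem poisson_conditional_expectation_bound :
    ∃ C : ℝ, 0 < C ∧ ∀ ν : ℝ, 1 ≤ ν → ∀ E : Set ℕ,
      ∑' i : E, ((i : ℕ) : ℝ) * poissonPMF ν i
        ≤ max (1 / ν) (C * ν ^ 3 * ∑' i : E, poissonPMF ν i) := by
  refine ⟨2, two_pos, fun ν hν E => ?_⟩
  have hν0 : 0 < ν := by linarith
  have hp : Summable fun i : E => poissonPMF ν i :=
    (hasSum_poissonPMF ν).summable.subtype E
  have hm : Summable fun i : E => ((i : ℕ) : ℝ) * poissonPMF ν i :=
    (hasSum_id_mul_poissonPMF ν).summable.subtype E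
  have hq := (hasSum_sq_mul_poissonPMF ν).summable
  have hqE : Summable fun i : E => ((i : ℕ) : ℝ) ^ 2 * poissonPMF ν i :=
    hq.subtype E
  have hsq : ∑' i : E, ((i : ℕ) : ℝ) ^ 2 * poissonPMF ν i ≤ ν * (ν + 1) := by
    rw [← (hasSum_sq_mul_poissonPMF ν).tsum_eq]
    exact hq.tsum_subtype_le _ E
      (fun i => mul_nonneg (sq_nonneg _) (poissonPMF_nonneg hν0.le i))
  have hle : ∑' i : E, ((i : ℕ) : ℝ) * poissonPMF ν i
      ≤ ν ^ 3 * ∑' i : E, poissonPMF ν i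
        + 1 / (4 * ν ^ 3) * ∑' i : E, ((i : ℕ) : ℝ) ^ 2 * poissonPMF ν i := by
    rw [← tsum_mul_left, ← tsum_mul_left,
      ← (hp.mul_left (ν ^ 3)).tsum_add (hqE.mul_left (1 / (4 * ν ^ 3)))]
    refine hm.tsum_le_tsum (fun i => ?_)
      ((hp.mul_left (ν ^ 3)).add (hqE.mul_left (1 / (4 * ν ^ 3))))
    have amgm : ((i : ℕ) : ℝ) ≤ ν ^ 3 + 1 / (4 * ν ^ 3) * ((i : ℕ) : ℝ) ^ 2 := by
      rw [← sub_nonneg]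
      have : ν ^ 3 + 1 / (4 * ν ^ 3) * ((i : ℕ) : ℝ) ^ 2 - ((i : ℕ) : ℝ)
          = (2 * ν ^ 3 - ((i : ℕ) : ℝ)) ^ 2 / (4 * ν ^ 3) := by
        field_simp
        ring
      rw [this]
      positivity
    calc ((i : ℕ) : ℝ) * poissonPMF ν i
        ≤ (ν ^ 3 + 1 / (4 * ν ^ 3) * ((i : ℕ) : ℝ) ^ 2) * poissonPMF ν i :=
          mul_le_mul_of_nonneg_right amgm (poissonPMF_nonneg hν0.le i)
      _ = ν ^ 3 * poissonPMF ν i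
          + 1 / (4 * ν ^ 3) * (((i : ℕ) : ℝ) ^ 2 * poissonPMF ν i) := by ring
  have htail : 1 / (4 * ν ^ 3) * ∑' i : E, ((i : ℕ) : ℝ) ^ 2 * poissonPMF ν i
      ≤ 1 / ν / 2 := by
    calc _ ≤ 1 / (4 * ν ^ 3) * (2 * ν ^ 2) := by
          gcongr
          nlinarith
      _ = 1 / ν / 2 := by
          field_simp
          norm_num
  have h₁ := le_max_left (1 / ν) (2 * ν ^ 3 * ∑' i : E, poissonPMF ν i)
  have h₂ := le_max_right (1 / ν) (2 * ν ^ 3 * ∑' i : E, poissonPMF ν i)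
  linarith
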